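/- arXiv:2205.15815 — 6 statements merged into one kernel-verified Lean document; each statement's English description precedes it below -/
import Mathlib

section
/- For every n ≥ 1, the fully symmetrized product of Kronecker deltas of rank 2n, namely t⁰(ι) := (1/(2n)!) · Σ_{σ ∈ Perm(Fin 2n)} Π_{j=0}^{n−1} δ(ι(σ(2j)), ι(σ(2j+1))) for ι : Fin 2n → Fin 3, is an invariant tensor of sl(2,ℂ): for every c ∈ Fin 3 and every ι : Fin 2n → Fin 3, Σ_{j ∈ Fin 2n} Σ_{b ∈ Fin 3} f(c, ι(j), b) · t⁰(Function.update ι j b) = 0. -/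
/-- The Levi-Civita symbol on three indices, totally antisymmetric with `ε(0,1,2) = 1`. -/
def lev (a b c : Fin 3) : ℂ :=
  if (a, b, c) = (0, 1, 2) ∨ (a, b, c) = (1, 2, 0) ∨ (a, b, c) = (2, 0, 1) then 1
  else if (a, b, c) = (2, 1, 0) ∨ (a, b, c) = (1, 0, 2) ∨ (a, b, c) = (0, 2, 1) then -1
  else 0

/-- The Kronecker delta on `Fin 3`, valued in `ℂ`. -/
def kdelta (a b : Fin 3) : ℂ := if a = b then 1 else 0

/-- The structure constants `f(a,b,c) = i√2 ε(a,b,c)` of `sl(2,ℂ)` in an orthonormal basis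
for the trace form. -/
noncomputable def fconst (a b c : Fin 3) : ℂ := Complex.I * (Real.sqrt 2 : ℂ) * lev a b c

/-- The fully symmetrized product of Kronecker deltas of rank `2n`:
`t⁰(ι) = (1/(2n)!) Σ_{σ ∈ Perm(Fin 2n)} Π_{j<n} δ(ι(σ(2j)), ι(σ(2j+1)))`. -/
noncomputable def symdelta (n : ℕ) (ι : Fin (2 * n) → Fin 3) : ℂ :=
  (1 / ((2 * n).factorial : ℂ)) *
    ∑ σ : Equiv.Perm (Fin (2 * n)),
      ∏ j : Fin n,
        kdelta (ι (σ ⟨2 * j.1, by omega⟩)) (ι (σ ⟨2 * j.1 + 1, by omega⟩))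

theorem sum_pairs (n : ℕ) (g : Fin (2 * n) → ℂ) :
    ∑ k : Fin (2 * n), g k =
      ∑ p : Fin n, (g ⟨2 * p.1, by omega⟩ + g ⟨2 * p.1 + 1, by omega⟩) := by
  rw [← Equiv.sum_comp (finProdFinEquiv.trans (finCongr (mul_comm n 2))) g,
    Fintype.sum_prod_type]
  refine Finset.sum_congr rfl fun p _ => ?_
  rw [Fin.sum_univ_two]
  congr 2
  · ext
    simp
  · ext
    simp [add_comm]

theorem fconst_antisymm (c x y : Fin 3) : fconst c x y + fconst c y x = 0 := by
  have : lev c x y + lev c y x = 0 := by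
    fin_cases c <;> fin_cases x <;> fin_cases y <;> simp [lev]
  unfold fconst
  rw [← mul_add, this, mul_zero]

theorem pairing_invariant (n : ℕ) (c : Fin 3) (κ : Fin (2 * n) → Fin 3) :
    ∑ k : Fin (2 * n), ∑ b : Fin 3, fconst c (κ k) b *
      ∏ j : Fin n, kdelta (Function.update κ k b ⟨2 * j.1, by omega⟩)
        (Function.update κ k b ⟨2 * j.1 + 1, by omega⟩) = 0 := by
  rw [sum_pairs]
  refine Finset.sum_eq_zero fun p _ => ?_
  have key : ∀ (k : Fin (2 * n)) (b : Fin 3), k.1 / 2 = p.1 →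
      ∏ j : Fin n, kdelta (Function.update κ k b ⟨2 * j.1, by omega⟩)
        (Function.update κ k b ⟨2 * j.1 + 1, by omega⟩) =
      kdelta (Function.update κ k b ⟨2 * p.1, by omega⟩)
        (Function.update κ k b ⟨2 * p.1 + 1, by omega⟩) *
      ∏ j ∈ Finset.univ.erase p, kdelta (κ ⟨2 * j.1, by omega⟩) (κ ⟨2 * j.1 + 1, by omega⟩) := by
    intro k b hk
    rw [← Finset.mul_prod_erase _ _ (Finset.mem_univ p)]
    congr 1
    refine Finset.prod_congr rfl fun j hj => ?_
    have hne : j.1 ≠ p.1 := fun h => (Finset.ne_of_mem_erase hj) (Fin.ext h)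
    rw [Function.update_of_ne, Function.update_of_ne]
    · intro h
      have := congrArg Fin.val h
      simp only at this
      omega
    · intro h
      have := congrArg Fin.val h
      simp only at this
      omega
  simp_rw [key ⟨2 * p.1, by omega⟩ _ (by simp), key ⟨2 * p.1 + 1, by omega⟩ _ (by simp; omega)]
  simp only [← mul_assoc, ← Finset.sum_mul, ← add_mul]
  refine mul_eq_zero_of_left ?_ _
  simp only [Function.update_apply, Fin.mk.injEq, kdelta]
  simp [fconst_antisymm]

/-- For every `n ≥ 1`, the fully symmetrized product of Kronecker deltas of rank `2n`
is an invariant tensor of `sl(2,ℂ)`. -/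
theorem stmt_5 (n : ℕ) (hn : 1 ≤ n) (c : Fin 3) (ι : Fin (2 * n) → Fin 3) :
    ∑ j : Fin (2 * n), ∑ b : Fin 3,
      fconst c (ι j) b * symdelta n (Function.update ι j b) = 0 := by
  have h : ∀ σ : Equiv.Perm (Fin (2 * n)),
      ∑ j : Fin (2 * n), ∑ b : Fin 3, fconst c (ι j) b *
        ∏ i : Fin n, kdelta (Function.update ι j b (σ ⟨2 * i.1, by omega⟩))
          (Function.update ι j b (σ ⟨2 * i.1 + 1, by omega⟩)) = 0 := by
    intro σ
    rw [← Equiv.sum_comp σ, ← pairing_invariant n c (ι ∘ σ)]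
    simp only [Function.update_apply, Function.comp_apply, σ.injective.eq_iff]
  have h2 := Finset.sum_eq_zero (s := Finset.univ) fun σ _ => h σ
  rw [Finset.sum_comm] at h2
  simp_rw [Finset.sum_comm (s := (Finset.univ : Finset (Equiv.Perm (Fin (2 * n))))),
    ← Finset.mul_sum] at h2
  unfold symdelta
  simp_rw [mul_left_comm (fconst _ _ _), ← Finset.mul_sum, h2, mul_zero]
end

section
/- Every invariant tensor of rank 2 on sl(2,ℂ) is a scalar multiple of the Kronecker delta: if t : Fin 3 → Fin 3 → ℂ satisfies Σ_{b ∈ Fin 3} ( f(c, a₁, b)·t(b, a₂) + f(c, a₂, b)·t(a₁, b) ) = 0 for all c, a₁, a₂ ∈ Fin 3, then there exists λ ∈ ℂ with t(a₁, a₂) = λ·δ(a₁, a₂) for all a₁, a₂. -/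
/-- Every invariant tensor of rank 2 on `sl(2,ℂ)` is a scalar multiple of the Kronecker
delta. -/
theorem stmt_7 (t : Fin 3 → Fin 3 → ℂ)
    (hinv : ∀ c a₁ a₂ : Fin 3,
      ∑ b : Fin 3, (fconst c a₁ b * t b a₂ + fconst c a₂ b * t a₁ b) = 0) :
    ∃ lam : ℂ, ∀ a₁ a₂ : Fin 3, t a₁ a₂ = lam * kdelta a₁ a₂ := by
  have hk : Complex.I * (Real.sqrt 2 : ℂ) ≠ 0 := by
    refine mul_ne_zero Complex.I_ne_zero ?_
    exact_mod_cast (Real.sqrt_pos.mpr (by norm_num : (0 : ℝ) < 2)).ne'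
  have key : ∀ c a₁ a₂ : Fin 3,
      ∑ b : Fin 3, (lev c a₁ b * t b a₂ + lev c a₂ b * t a₁ b) = 0 := by
    intro c a₁ a₂
    have h := hinv c a₁ a₂
    apply (mul_eq_zero.mp _).resolve_left hk
    rw [← h, Finset.mul_sum]
    refine Finset.sum_congr rfl fun b _ => ?_
    unfold fconst
    ring
  have h1 := key 0 0 1
  have h2 := key 0 0 2
  have h3 := key 1 1 0
  have h4 := key 1 1 2
  have h5 := key 2 2 0
  have h6 := key 2 2 1
  have h7 := key 0 1 2
  have h8 := key 1 2 0
  simp [Fin.sum_univ_three, lev] at h1 h2 h3 h4 h5 h6 h7 h8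
  refine ⟨t 0 0, fun a b => ?_⟩
  fin_cases a <;> fin_cases b <;> simp [kdelta] <;> first | assumption | linear_combination h8 | linear_combination h7 + h8 | linear_combination -h8 | linear_combination -h7 - h8
end

section
/- Every invariant tensor of rank 3 on sl(2,ℂ) is a scalar multiple of the Levi-Civita symbol: if t : Fin 3 → Fin 3 → Fin 3 → ℂ satisfies Σ_{b ∈ Fin 3} ( f(c, a₁, b)·t(b, a₂, a₃) + f(c, a₂, b)·t(a₁, b, a₃) + f(c, a₃, b)·t(a₁, a₂, b) ) = 0 for all c, a₁, a₂, a₃ ∈ Fin 3, then there exists λ ∈ ℂ with t(a₁, a₂, a₃) = λ·ε(a₁, a₂, a₃) for all a₁, a₂, a₃. -/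
/-- Every invariant tensor of rank 3 on `sl(2,ℂ)` is a scalar multiple of the Levi-Civita
symbol. -/
theorem stmt_8 (t : Fin 3 → Fin 3 → Fin 3 → ℂ)
    (hinv : ∀ c a₁ a₂ a₃ : Fin 3,
      ∑ b : Fin 3, (fconst c a₁ b * t b a₂ a₃ + fconst c a₂ b * t a₁ b a₃
        + fconst c a₃ b * t a₁ a₂ b) = 0) :
    ∃ lam : ℂ, ∀ a₁ a₂ a₃ : Fin 3, t a₁ a₂ a₃ = lam * lev a₁ a₂ a₃ := by
  have hk : Complex.I * (Real.sqrt 2 : ℂ) ≠ 0 := by simp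
  have h : ∀ c a₁ a₂ a₃ : Fin 3,
      ∑ b : Fin 3, (lev c a₁ b * t b a₂ a₃ + lev c a₂ b * t a₁ b a₃
        + lev c a₃ b * t a₁ a₂ b) = 0 := by
    intro c a₁ a₂ a₃
    have h1 := hinv c a₁ a₂ a₃
    apply (mul_eq_zero.mp _).resolve_left hk
    rw [← h1, Finset.mul_sum]
    refine Finset.sum_congr rfl fun b _ => ?_
    simp only [fconst]
    ring
  clear hinv hk
  simp only [Fin.forall_fin_succ, Fin.sum_univ_three] at h
  simp [lev] at h
  refine ⟨t 0 1 2, ?_⟩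
  intro a b c
  fin_cases a <;> fin_cases b <;> fin_cases c <;> simp [lev] <;> grind
end

section
/- Nonzero totally symmetric invariant tensors of sl(2,ℂ) exist only in even rank: for every odd natural number n, if t : (Fin n → Fin 3) → ℂ is totally symmetric (t(ι ∘ σ) = t(ι) for all permutations σ of Fin n) and invariant, then t = 0. -/
theorem fconst_eq_zero (a b c : Fin 3) (h : a = b ∨ a = c ∨ b = c) : fconst a b c = 0 := by
  have : lev a b c = 0 := by
    revert h
    fin_cases a <;> fin_cases b <;> fin_cases c <;> simp [lev]
  simp [fconst, this]

theorem fconst_ne_zero (a b c : Fin 3) (h1 : a ≠ b) (h2 : a ≠ c) (h3 : b ≠ c) :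
    fconst a b c ≠ 0 := by
  have : lev a b c ≠ 0 := by
    revert h1 h2 h3
    fin_cases a <;> fin_cases b <;> fin_cases c <;> simp [lev]
  simp [fconst, this]

theorem filter_update_erase {n : ℕ} (ι : Fin n → Fin 3) (j : Fin n) (x y : Fin 3) (hxy : x ≠ y) :
    (Finset.univ.filter fun i => Function.update ι j y i = x)
      = (Finset.univ.filter fun i => ι i = x).erase j := by
  ext i
  by_cases h : i = j
  · subst h; simp [hxy.symm]
  · simp [h]

theorem odd_count_zero {n : ℕ} (t : (Fin n → Fin 3) → ℂ)
    (hsym : ∀ (σ : Equiv.Perm (Fin n)) (ι : Fin n → Fin 3), t (ι ∘ σ) = t ι)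
    (hinv : ∀ (c : Fin 3) (ι : Fin n → Fin 3),
      ∑ j : Fin n, ∑ b : Fin 3, fconst c (ι j) b * t (Function.update ι j b) = 0)
    (c x y : Fin 3) (hcx : c ≠ x) (hcy : c ≠ y) (hxy : x ≠ y) (m : ℕ) :
    ∀ ι : Fin n → Fin 3, (Finset.univ.filter fun i => ι i = x).card = 2 * m + 1 → t ι = 0 := by
  have hall : ∀ b : Fin 3, b = c ∨ b = x ∨ b = y := by
    intro b; omega
  induction m with
  | zero => ?_
  | succ m ih => ?_
  all_goals
    intro ι hι
    obtain ⟨j0, hj0⟩ : (Finset.univ.filter fun i => ι i = x).Nonempty := by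
      rw [← Finset.card_pos]; omega
    have hj0' : ι j0 = x := by simpa using hj0
    set κ := Function.update ι j0 y with hκ
    have hκc : (Finset.univ.filter fun i => κ i = x)
      = (Finset.univ.filter fun i => ι i = x).erase j0 := filter_update_erase ι j0 x y hxy
    have key : ∀ j, κ j = x → t (Function.update κ j y) = 0 := by
      intro j hj
      have hjm : j ∈ (Finset.univ.filter fun i => κ i = x) := by simpa using hj
      have h1 := Finset.card_erase_of_mem hj0
      have h2 := Finset.card_erase_of_mem hjm
      have h3 := Finset.card_pos.2 ⟨j, hjm⟩
      rw [hκc] at h2 h3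
      first
        | (exfalso; omega)
        | (apply ih
           rw [filter_update_erase κ j x y hxy, hκc]
           omega)
    have hterm : ∀ j, ∑ b : Fin 3, fconst c (κ j) b * t (Function.update κ j b)
        = if κ j = y then fconst c y x * t ι else 0 := by
      intro j
      rcases hall (κ j) with h | h | h
      · rw [h, if_neg hcy]
        exact Finset.sum_eq_zero fun b _ => by rw [fconst_eq_zero _ _ _ (Or.inl rfl), zero_mul]
      · rw [h, if_neg hxy]
        refine Finset.sum_eq_zero fun b _ => ?_
        rcases hall b with hb | hb | hb
        · rw [fconst_eq_zero _ _ _ (Or.inr (Or.inl hb.symm)), zero_mul]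
        · rw [fconst_eq_zero _ _ _ (Or.inr (Or.inr hb.symm)), zero_mul]
        · rw [hb, key j h, mul_zero]
      · rw [h, if_pos rfl, Finset.sum_eq_single x]
        · congr 1
          rw [← hsym (Equiv.swap j j0) ι]
          congr 1
          ext i
          congr 1
          by_cases hij : i = j
          · subst hij; simp [hj0']
          · by_cases hij0 : i = j0
            · subst hij0
              have hne : j ≠ i := fun h => hij h.symm
              simp [hκ, hij, hne] at h ⊢
              exact h.symm
            · simp [hκ, hij, hij0, Equiv.swap_apply_of_ne_of_ne hij hij0]
        · intro b _ hbx
          rcases hall b with hb | hb | hb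
          · rw [fconst_eq_zero _ _ _ (Or.inr (Or.inl hb.symm)), zero_mul]
          · exact absurd hb hbx
          · rw [fconst_eq_zero _ _ _ (Or.inr (Or.inr hb.symm)), zero_mul]
        · simp
    have hs := hinv c κ
    simp only [hterm] at hs
    rw [← Finset.sum_filter, Finset.sum_const, nsmul_eq_mul] at hs
    have hpos : (Finset.univ.filter fun i => κ i = y).card ≠ 0 :=
      (Finset.card_pos.2 ⟨j0, by simp [hκ]⟩).ne'
    have hf := fconst_ne_zero c y x hcy hcx hxy.symm
    rcases mul_eq_zero.1 hs with h | h
    · exact absurd (by exact_mod_cast h) hpos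
    · exact (mul_eq_zero.1 h).resolve_left hf

/-- Nonzero totally symmetric invariant tensors of `sl(2,ℂ)` exist only in even rank:
every totally symmetric invariant tensor of odd rank vanishes. -/
theorem stmt_9 (n : ℕ) (hn : Odd n) (t : (Fin n → Fin 3) → ℂ)
    (hsym : ∀ (σ : Equiv.Perm (Fin n)) (ι : Fin n → Fin 3), t (ι ∘ σ) = t ι)
    (hinv : ∀ (c : Fin 3) (ι : Fin n → Fin 3),
      ∑ j : Fin n, ∑ b : Fin 3, fconst c (ι j) b * t (Function.update ι j b) = 0) :
    t = 0 := by
  funext ι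
  have hsum : ∑ x : Fin 3, (Finset.univ.filter fun i => ι i = x).card = n := by
    have := Finset.card_eq_sum_card_fiberwise (s := (Finset.univ : Finset (Fin n)))
      (t := (Finset.univ : Finset (Fin 3))) (f := ι) (by intro i _; simp)
    simpa using this.symm
  rw [Fin.sum_univ_three] at hsum
  obtain ⟨k, hk⟩ := hn
  have h := fun c x y h1 h2 h3 m => odd_count_zero t hsym hinv c x y h1 h2 h3 m ι
  have hc : ∀ a : ℕ, a % 2 = 1 → a = 2 * (a / 2) + 1 := by intro a ha; omega
  rcases (by omega : (Finset.univ.filter fun i => ι i = 0).card % 2 = 1 ∨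
      (Finset.univ.filter fun i => ι i = 1).card % 2 = 1 ∨
      (Finset.univ.filter fun i => ι i = 2).card % 2 = 1) with h0 | h0 | h0
  · exact h 1 0 2 (by decide) (by decide) (by decide) _ (hc _ h0)
  · exact h 0 1 2 (by decide) (by decide) (by decide) _ (hc _ h0)
  · exact h 0 2 1 (by decide) (by decide) (by decide) _ (hc _ h0)
end

section
/- For all complex numbers z, w, x with z ≠ w, z ≠ x and w ≠ x, and all natural numbers p, q, the following rational-function identity holds: (−1)^{p+q}·p!·q! / ((z−x)^{p+1}·(w−x)^{q+1}) = (−1)^{p+1}·(p+q)! · ( 1/(z−x) − 1/(w−x) ) / (z−w)^{p+q+1} + Σ_{k=1}^{p} (−1)^{p+1} · C(p,k) · (p+q−k)! · k! / ( (z−x)^{k+1} · (z−w)^{p+q+1−k} ) − Σ_{k=1}^{q} (−1)^{p+1+k} · C(q,k) · (p+q−k)! · k! / ( (w−x)^{k+1} · (z−w)^{p+q+1−k} ), where C(p,k) denotes the binomial coefficient. (This is the scalar identity which, summed over the poles x = z_i, yields the commutation relations [A⁽ᵖ⁾(z), B⁽ᑫ⁾(w)] of the meromorphic currents A⁽ᵖ⁾(z)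 = Σᵢ (−1)ᵖ p! A⁽ⁱ⁾/(z−zᵢ)^{p+1}.) -/
noncomputable def auxS (s e v : ℂ) (p q : ℕ) : ℂ :=
  ∑ k ∈ Finset.range (q + 1),
    s ^ (q + k) * ((p + q - k).choose p : ℂ) * v ^ (k + 1) * e ^ (p + q + 1 - k)

lemma auxS_zero (s e v : ℂ) (p : ℕ) : auxS s e v p 0 = v * e ^ (p + 1) := by
  simp [auxS]

lemma auxS_succ (s e v : ℂ) (hs : s ^ 2 = 1) (p q : ℕ) :
    auxS s e v p (q + 1) =
      v * auxS s e v p q + s ^ (q + 1) * ((p + q + 1).choose p : ℂ) * v * e ^ (p + q + 2) := by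
  unfold auxS
  rw [Finset.sum_range_succ', Finset.mul_sum]
  congr 1
  · apply Finset.sum_congr rfl
    intro k _
    rw [show p + (q + 1) - (k + 1) = p + q - k by omega,
      show p + (q + 1) + 1 - (k + 1) = p + q + 1 - k by omega,
      show q + 1 + (k + 1) = q + k + 2 by omega, pow_add s (q + k) 2, hs]
    ring
  · simp [← add_assoc]

lemma auxS_mul (e u v : ℂ) (h : u * v = e * (v - u)) (p q : ℕ) :
    u * auxS (-1) e v p q = auxS (-1) e v (p + 1) q
      - (-1) ^ q * ((p + q + 1).choose q : ℂ) * u * e ^ (p + q + 2) := by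
  induction q with
  | zero =>
    simp only [auxS_zero, ← mul_assoc, h]
    simp
    ring
  | succ q ih =>
    rw [auxS_succ _ _ _ (by norm_num), auxS_succ _ _ _ (by norm_num)]
    have hc : ((p + (q + 1) + 1).choose (q + 1) : ℂ)
        = (p + q + 1).choose q + (p + q + 1).choose p := by
      have h1 : (p + q + 1).choose p = (p + q + 1).choose (q + 1) :=
        Nat.choose_symm_of_eq_add (by omega)
      rw [h1, show p + (q + 1) + 1 = (p + q + 1) + 1 by omega, Nat.choose_succ_succ]
      push_cast; ring
    have hc2 : ((p + 1 + q + 1).choose (p + 1) : ℂ) = (p + (q + 1) + 1).choose (q + 1) := by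
      rw [show p + (q + 1) + 1 = p + 1 + q + 1 by omega,
        Nat.choose_symm_of_eq_add (show p + 1 + q + 1 = (p + 1) + (q + 1) by omega)]
    rw [hc2, hc, mul_add, mul_left_comm, ih]
    rw [show p + 1 + q + 2 = p + q + 2 + 1 by omega, show p + (q + 1) + 2 = p + q + 2 + 1 by omega]
    generalize ((p + q + 1).choose q : ℂ) = c
    generalize ((p + q + 1).choose p : ℂ) = d
    linear_combination (-1) ^ (q + 1) * (c + d) * e ^ (p + q + 2) * h

lemma aux_main (e u v : ℂ) (h : u * v = e * (v - u)) (p q : ℕ) :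
    u ^ (p + 1) * v ^ (q + 1) =
      (-1) ^ (q + 1) * auxS 1 e u q p + auxS (-1) e v p q := by
  induction p with
  | zero =>
    rw [auxS_zero]
    induction q with
    | zero => rw [auxS_zero]; linear_combination h
    | succ q ih =>
      rw [auxS_succ _ _ _ (by norm_num)]
      simp only [Nat.choose_zero_right, Nat.cast_one]
      rw [show 0 + q + 2 = q + 2 by omega]
      linear_combination v * ih + (-1) ^ (q + 1) * e ^ (q + 1) * h
  | succ p ih =>
    have h2 := auxS_mul e u v h p q
    rw [auxS_succ _ _ _ (by norm_num)]
    rw [Nat.choose_symm_of_eq_add (show p + q + 1 = q + (p + 1) by omega)] at h2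
    have h3 : (q + p + 1).choose q = (p + q + 1).choose (p + 1) := by
      rw [show q + p + 1 = p + q + 1 by omega,
        Nat.choose_symm_of_eq_add (show p + q + 1 = q + (p + 1) by omega)]
    rw [Nat.choose_symm_of_eq_add (show p + q + 1 = (p + 1) + q by omega)] at h3
    rw [h3, one_pow]
    rw [Nat.choose_symm_of_eq_add (show p + q + 1 = (p + 1) + q by omega)] at h2
    rw [show q + p + 2 = p + q + 2 by omega]
    linear_combination u * ih + h2

lemma aux_fact (p q k : ℕ) (hk : k ≤ p) :
    (p.choose k : ℂ) * ((p + q - k).factorial : ℂ) * (k.factorial : ℂ)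
      = p.factorial * q.factorial * (p + q - k).choose q := by
  have h1 := Nat.choose_mul_factorial_mul_factorial hk
  have h2 := Nat.choose_mul_factorial_mul_factorial (show q ≤ p + q - k by omega)
  rw [show p + q - k - q = p - k by omega] at h2
  rw [← h1, ← h2]
  push_cast
  ring

lemma aux_icc (f : ℕ → ℂ) (n : ℕ) :
    ∑ k ∈ Finset.Icc 1 n, f k = ∑ k ∈ Finset.range (n + 1), f k - f 0 := by
  induction n with
  | zero => simp
  | succ n ih =>
    rw [Finset.sum_Icc_succ_top (by omega), ih, Finset.sum_range_succ _ (n + 1)]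
    ring

/-- The partial-fraction identity underlying the commutation relations
`[A⁽ᵖ⁾(z), B⁽ᑫ⁾(w)]` of the meromorphic currents
`A⁽ᵖ⁾(z) = Σᵢ (−1)ᵖ p! A⁽ⁱ⁾/(z−zᵢ)^(p+1)`. -/
theorem stmt_11 (z w x : ℂ) (hzw : z ≠ w) (hzx : z ≠ x) (hwx : w ≠ x) (p q : ℕ) :
    (-1) ^ (p + q) * (p.factorial : ℂ) * (q.factorial : ℂ)
        / ((z - x) ^ (p + 1) * (w - x) ^ (q + 1)) =
      (-1) ^ (p + 1) * ((p + q).factorial : ℂ) * (1 / (z - x) - 1 / (w - x))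
          / (z - w) ^ (p + q + 1)
        + ∑ k ∈ Finset.Icc 1 p,
            (-1) ^ (p + 1) * (p.choose k : ℂ) * ((p + q - k).factorial : ℂ)
              * (k.factorial : ℂ) / ((z - x) ^ (k + 1) * (z - w) ^ (p + q + 1 - k))
        - ∑ k ∈ Finset.Icc 1 q,
            (-1) ^ (p + 1 + k) * (q.choose k : ℂ) * ((p + q - k).factorial : ℂ)
              * (k.factorial : ℂ) / ((w - x) ^ (k + 1) * (z - w) ^ (p + q + 1 - k)) := by
  have ha : z - x ≠ 0 := sub_ne_zero.mpr hzx
  have hb : w - x ≠ 0 := sub_ne_zero.mpr hwx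
  have hd : z - w ≠ 0 := sub_ne_zero.mpr hzw
  have h : (z - x)⁻¹ * (w - x)⁻¹ = (z - w)⁻¹ * ((w - x)⁻¹ - (z - x)⁻¹) := by
    field_simp
    ring
  have hm := aux_main _ _ _ h p q
  have hp : ∑ k ∈ Finset.range (p + 1),
      (-1) ^ (p + 1) * (p.choose k : ℂ) * ((p + q - k).factorial : ℂ)
        * (k.factorial : ℂ) / ((z - x) ^ (k + 1) * (z - w) ^ (p + q + 1 - k))
      = (-1) ^ (p + 1) * p.factorial * q.factorial * auxS 1 (z - w)⁻¹ (z - x)⁻¹ q p := by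
    unfold auxS
    rw [Finset.mul_sum]
    apply Finset.sum_congr rfl
    intro k hk
    have hf := aux_fact p q k (by simp at hk; omega)
    rw [add_comm q p, one_pow, div_eq_mul_inv, mul_inv, ← inv_pow, ← inv_pow]
    linear_combination (-1) ^ (p + 1) * (z - x)⁻¹ ^ (k + 1) * (z - w)⁻¹ ^ (p + q + 1 - k) * hf
  have hq : ∑ k ∈ Finset.range (q + 1),
      (-1) ^ (p + 1 + k) * (q.choose k : ℂ) * ((p + q - k).factorial : ℂ)
        * (k.factorial : ℂ) / ((w - x) ^ (k + 1) * (z - w) ^ (p + q + 1 - k))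
      = (-1) ^ (p + q + 1) * p.factorial * q.factorial
          * auxS (-1) (z - w)⁻¹ (w - x)⁻¹ p q := by
    unfold auxS
    rw [Finset.mul_sum]
    apply Finset.sum_congr rfl
    intro k hk
    have hf := aux_fact q p k (by simp at hk; omega)
    rw [add_comm q p] at hf
    have hs : (-1 : ℂ) ^ (p + q + 1) * (-1) ^ (q + k) = (-1) ^ (p + 1 + k) := by
      rw [← pow_add, show p + q + 1 + (q + k) = (p + 1 + k) + 2 * q by ring, pow_add, pow_mul]
      norm_num
    rw [div_eq_mul_inv, mul_inv, ← inv_pow, ← inv_pow, ← hs]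
    linear_combination (-1 : ℂ) ^ (p + q + 1) * (-1) ^ (q + k) * (w - x)⁻¹ ^ (k + 1)
      * (z - w)⁻¹ ^ (p + q + 1 - k) * hf
  rw [aux_icc, aux_icc, hp, hq, div_eq_mul_inv _ ((z - x) ^ (p + 1) * (w - x) ^ (q + 1)),
    mul_inv, ← inv_pow, ← inv_pow, hm]
  have hs : (-1 : ℂ) ^ (q * 2) = 1 := by rw [mul_comm, pow_mul]; norm_num
  simp only [Nat.choose_zero_right, Nat.cast_one, Nat.factorial_zero, Nat.sub_zero, zero_add,
    pow_one, add_zero, mul_one, div_eq_mul_inv, mul_inv, one_mul]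
  linear_combination (-1) ^ (p + 1) * (p.factorial : ℂ) * q.factorial
    * auxS 1 (z - w)⁻¹ (z - x)⁻¹ q p * hs
end

section
/- Let V be the free ℂ-vector space with basis consisting of symbols J(a,m,p) for a ∈ Fin 3, m ∈ ℤ, p ∈ ℕ, and K(p) for p ∈ ℕ. Define a bilinear bracket on V by [J(a,m,p), J(b,n,q)] := −(p!·q!/(p+q+1)!) · ( Σ_{c ∈ Fin 3} f(a,b,c)·J(c, m+n, p+q+1) − n·δ(a,b)·[m+n=0]·K(p+q+1) ), and [K(p), v] = [v, K(p)] = 0 for all basis vectors v. Then this bracket is alternating ([x,x] = 0 for all x ∈ V) and satisfies the Jacobi identity [[x,y],z] + [[y,z],x] + [[z,x],y] = 0 for all x, y, z ∈ V; hence it makes V a complex Lie algebra (the Lie algebra 𝔏 of meromorphic currents of the affine sl₂ Gaudin model). -/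
/-- Basis symbols of the Lie algebra `𝔏` of meromorphic currents: the currents
`J(a,m,p) = Iᵃ⁽ᵖ⁾ₘ(z)` and the central currents `K(p) = 𝗄⁽ᵖ⁾(z)`. -/
inductive GB where
  | J : Fin 3 → ℤ → ℕ → GB
  | K : ℕ → GB

/-- The bracket of two basis vectors, as an element of the free vector space on `GB`:
`[J(a,m,p), J(b,n,q)] = −(p!q!/(p+q+1)!)(Σ_c f(a,b,c) J(c,m+n,p+q+1)
  − n δ(a,b) [m+n=0] K(p+q+1))`, and `K(p)` is central. -/
noncomputable def gbBracket : GB → GB → (GB →₀ ℂ)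
  | GB.J a m p, GB.J b n q =>
      (-(((p.factorial : ℂ) * (q.factorial : ℂ)) / ((p + q + 1).factorial : ℂ))) •
        ((∑ c : Fin 3, fconst a b c • Finsupp.single (GB.J c (m + n) (p + q + 1)) (1 : ℂ))
          - ((n : ℂ) * kdelta a b * (if m + n = 0 then 1 else 0)) •
              Finsupp.single (GB.K (p + q + 1)) (1 : ℂ))
  | _, _ => 0

/-- The bilinear extension of `gbBracket` to the free vector space `GB →₀ ℂ`. -/
noncomputable def lBracket (x y : GB →₀ ℂ) : GB →₀ ℂ :=
  x.sum fun u cu => y.sum fun v cv => (cu * cv) • gbBracket u v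

/-- The bilinear map underlying `lBracket`. -/
noncomputable def bilB : (GB →₀ ℂ) →ₗ[ℂ] (GB →₀ ℂ) →ₗ[ℂ] (GB →₀ ℂ) :=
  Finsupp.lsum ℂ fun u => LinearMap.toSpanSingleton ℂ _
    (Finsupp.lsum ℂ fun v => LinearMap.toSpanSingleton ℂ _ (gbBracket u v))

theorem lBracket_eq (x y : GB →₀ ℂ) : lBracket x y = bilB x y := by
  unfold lBracket bilB
  rw [Finsupp.lsum_apply, Finsupp.sum, Finsupp.sum, LinearMap.sum_apply]
  refine Finset.sum_congr rfl fun u _ => ?_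
  simp [Finsupp.lsum_apply, Finsupp.sum, Finset.smul_sum, mul_smul]

theorem bilB_single (u v : GB) :
    bilB (Finsupp.single u 1) (Finsupp.single v 1) = gbBracket u v := by
  simp [bilB]

theorem fconst_skew (a b c : Fin 3) : fconst a b c = - fconst b a c := by
  fin_cases a <;> fin_cases b <;> fin_cases c <;> simp [fconst, lev]

theorem fconst_cyc (a b c : Fin 3) : fconst b c a = fconst a b c := by
  fin_cases a <;> fin_cases b <;> fin_cases c <;> simp [fconst, lev]

theorem lev_jacobi (a b c e : Fin 3) :
    (∑ d, lev a b d * lev d c e) + (∑ d, lev b c d * lev d a e)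
      + (∑ d, lev c a d * lev d b e) = 0 := by
  fin_cases a <;> fin_cases b <;> fin_cases c <;> fin_cases e <;>
    simp [lev, Fin.sum_univ_three]

theorem fconst_jacobi (a b c e : Fin 3) :
    (∑ d, fconst a b d * fconst d c e) + (∑ d, fconst b c d * fconst d a e)
      + (∑ d, fconst c a d * fconst d b e) = 0 := by
  have h := lev_jacobi a b c e
  simp only [Fin.sum_univ_three, fconst] at h ⊢
  linear_combination (Complex.I * (Real.sqrt 2 : ℂ)) ^ 2 * h

theorem gb_skew (u v : GB) : gbBracket u v = - gbBracket v u := by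
  rcases u with ⟨a, m, p⟩ | p <;> rcases v with ⟨b, n, q⟩ | q <;> simp only [gbBracket, neg_zero]
  rw [add_comm n m, add_comm q p, mul_comm (q.factorial : ℂ), ← smul_neg]
  congr 1
  have hk : (n : ℂ) * kdelta a b * (if m + n = 0 then 1 else 0)
      = - ((m : ℂ) * kdelta b a * (if m + n = 0 then 1 else 0)) := by
    have hd : kdelta b a = kdelta a b := by simp [kdelta, eq_comm]
    rw [hd]
    split_ifs with h
    · have h' : (m : ℂ) + n = 0 := by exact_mod_cast h
      linear_combination kdelta a b * h'
    · simp
  rw [hk]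
  simp only [Fin.sum_univ_three, fconst_skew a b]
  module

theorem gb_double (a b c : Fin 3) (m n r : ℤ) (p q s : ℕ) :
    bilB (gbBracket (GB.J a m p) (GB.J b n q)) (Finsupp.single (GB.J c r s) 1) =
      ((p.factorial : ℂ) * q.factorial * s.factorial / ((p + q + s + 2).factorial : ℂ)) •
        ((∑ e : Fin 3, (∑ d, fconst a b d * fconst d c e) •
            Finsupp.single (GB.J e (m + n + r) (p + q + s + 2)) (1 : ℂ))
          - ((r : ℂ) * fconst a b c * (if m + n + r = 0 then 1 else 0)) •
              Finsupp.single (GB.K (p + q + s + 2)) (1 : ℂ)) := by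
  have hfac : ((p.factorial : ℂ) * q.factorial * s.factorial / ((p + q + s + 2).factorial : ℂ))
      = (-(((p.factorial : ℂ) * (q.factorial : ℂ)) / ((p + q + 1).factorial : ℂ))) *
        (-((((p + q + 1).factorial : ℂ) * (s.factorial : ℂ)) / ((p + q + s + 2).factorial : ℂ))) := by
    have h1 : ((p + q + 1).factorial : ℂ) ≠ 0 := by exact_mod_cast Nat.factorial_ne_zero _
    have h2 : ((p + q + s + 2).factorial : ℂ) ≠ 0 := by exact_mod_cast Nat.factorial_ne_zero _
    field_simp
  have hidx : p + q + 1 + s + 1 = p + q + s + 2 := by ring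
  have hd : fconst a b c = ∑ d, fconst a b d * kdelta d c := by simp [kdelta]
  rw [hfac, hd, gbBracket]
  simp only [map_smul, map_sub, map_sum, LinearMap.smul_apply, LinearMap.sub_apply,
    LinearMap.sum_apply, bilB_single]
  simp only [gbBracket, hidx, Fin.sum_univ_three]
  module

theorem gb_jacobi (u v w : GB) :
    bilB (gbBracket u v) (Finsupp.single w 1) + bilB (gbBracket v w) (Finsupp.single u 1)
      + bilB (gbBracket w u) (Finsupp.single v 1) = 0 := by
  have hK : ∀ (x : GB →₀ ℂ) (t : ℕ), bilB x (Finsupp.single (GB.K t) 1) = 0 := by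
    intro x t
    have : bilB.flip (Finsupp.single (GB.K t) 1) = 0 := by
      ext1 u
      ext1
      rcases u with ⟨a, m, p⟩ | p <;> simp [bilB_single, gbBracket]
    exact LinearMap.congr_fun this x
  have h1 : ∀ (t : ℕ) (x : GB), gbBracket (GB.K t) x = 0 := by
    intro t x; rcases x with ⟨a, m, p⟩ | p <;> rfl
  have h2 : ∀ (t : ℕ) (x : GB), gbBracket x (GB.K t) = 0 := by
    intro t x; rcases x with ⟨a, m, p⟩ | p <;> rfl
  rcases u with ⟨a, m, p⟩ | p
  swap
  · simp [hK, h1, h2]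
  rcases v with ⟨b, n, q⟩ | q
  swap
  · simp [hK, h1, h2]
  rcases w with ⟨c, r, s⟩ | s
  swap
  · simp [hK, h1, h2]
  rw [gb_double, gb_double, gb_double]
  have e1 : n + r + m = m + n + r := by ring
  have e2 : r + m + n = m + n + r := by ring
  have e3 : q + s + p + 2 = p + q + s + 2 := by ring
  have e4 : s + p + q + 2 = p + q + s + 2 := by ring
  have f1 : (q.factorial : ℂ) * s.factorial * p.factorial
    = p.factorial * q.factorial * s.factorial := by ring
  have f2 : (s.factorial : ℂ) * p.factorial * q.factorial
    = p.factorial * q.factorial * s.factorial := by ring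
  rw [e1, e2, e3, e4, f1, f2, ← smul_add, ← smul_add]
  refine smul_eq_zero_of_right _ ?_
  rw [fconst_cyc a b c, ← fconst_cyc c a b]
  have hJ : ∀ e, (∑ d, fconst c a d * fconst d b e) =
      -(∑ d, fconst a b d * fconst d c e) - (∑ d, fconst b c d * fconst d a e) := by
    intro e
    linear_combination fconst_jacobi a b c e
  have hn : (r : ℂ) * fconst a b c * (if m + n + r = 0 then 1 else 0)
      = - ((m : ℂ) * fconst a b c * (if m + n + r = 0 then 1 else 0))
        - ((n : ℂ) * fconst a b c * (if m + n + r = 0 then 1 else 0)) := by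
    split_ifs with h
    · have h' : (m : ℂ) + n + r = 0 := by exact_mod_cast h
      linear_combination fconst a b c * h'
    · simp
  rw [hn]
  simp only [hJ]
  simp only [Fin.sum_univ_three]
  module

theorem bilB_skew (x y : GB →₀ ℂ) : bilB x y = - bilB y x := by
  have h : bilB + bilB.flip = 0 := by
    ext1 u
    ext1
    ext1 v
    ext1
    simp only [LinearMap.comp_apply, Finsupp.lsingle_apply, LinearMap.add_apply,
      LinearMap.flip_apply, bilB_single, LinearMap.zero_apply]
    rw [gb_skew u v, neg_add_cancel]
  exact eq_neg_of_add_eq_zero_left (LinearMap.congr_fun (LinearMap.congr_fun h x) y)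

theorem bilB_jacobi (x y z : GB →₀ ℂ) :
    bilB (bilB x y) z + bilB (bilB y z) x + bilB (bilB z x) y = 0 := by
  induction x using Finsupp.induction_linear with
  | zero => simp
  | add x x' hx hx' =>
    simp only [map_add, LinearMap.add_apply]
    linear_combination (norm := module) hx + hx'
  | single u α =>
  induction y using Finsupp.induction_linear with
  | zero => simp
  | add x x' hx hx' =>
    simp only [map_add, LinearMap.add_apply]
    linear_combination (norm := module) hx + hx'
  | single v β =>
  induction z using Finsupp.induction_linear with
  | zero => simp
  | add x x' hx hx' =>
    simp only [map_add, LinearMap.add_apply]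
    linear_combination (norm := module) hx + hx'
  | single w γ =>
  have hs : ∀ (t : GB) (k : ℂ), Finsupp.single t k = k • Finsupp.single t (1 : ℂ) := by
    intro t k; simp
  rw [hs u α, hs v β, hs w γ]
  simp only [map_smul, LinearMap.smul_apply, bilB_single]
  have h := congrArg (fun t => (α * β * γ) • t) (gb_jacobi u v w)
  simp only [smul_add, smul_zero] at h
  rw [← h]
  module

/-- The bracket on the free vector space on the symbols `J(a,m,p)`, `K(p)` is alternating
and satisfies the Jacobi identity, hence makes it a complex Lie algebra: the Lie algebra
`𝔏` of meromorphic currents of the affine `sl₂` Gaudin model. -/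
theorem stmt_12 :
    (∀ x : GB →₀ ℂ, lBracket x x = 0) ∧
    (∀ x y z : GB →₀ ℂ,
      lBracket (lBracket x y) z + lBracket (lBracket y z) x
        + lBracket (lBracket z x) y = 0) := by
  refine ⟨fun x => ?_, fun x y z => ?_⟩
  · rw [lBracket_eq]
    exact self_eq_neg.mp (bilB_skew x x)
  · simp only [lBracket_eq]
    exact bilB_jacobi x y z
end
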